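/- arXiv:1706.03306 — 2 statements merged into one kernel-verified Lean document; each statement's English description precedes it below -/
import Mathlib

section
/- Let r ≥ 3 and let H be an r-uniform r-partite linear hypergraph containing no rainbow cycles of length three or four. Then H is G_r(8r−13, 8)-free. -/
open Finset

/-- A hypergraph `H` is `G_r(v,e)`-free if any `e` distinct edges span at least `v+1` vertices. -/
def GFree {V : Type*} [DecidableEq V] (H : Finset (Finset V)) (v e : ℕ) : Prop :=
  ∀ S ⊆ H, S.card = e → v + 1 ≤ (S.biUnion id).card

/-- `extremalF r n v e` is the maximum number of edges of a `G_r(v,e)`-free `r`-uniform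
hypergraph on `n` vertices. -/
noncomputable def extremalF (r n v e : ℕ) : ℕ :=
  sSup {m : ℕ | ∃ H : Finset (Finset (Fin n)),
    (∀ A ∈ H, A.card = r) ∧ GFree H v e ∧ H.card = m}
/-- `H` (an `r`-uniform `r`-partite hypergraph with parts given by `part`) contains a rainbow
cycle of length `k`: `k` distinct vertices and `k` distinct edges, with `vᵢ, vᵢ₊₁ ∈ Aᵢ`
(cyclically), and the `k` vertices lying in `k` distinct vertex parts. -/
def HasRainbowCycle {V : Type*} {r : ℕ} (H : Finset (Finset V)) (part : V → Fin r)
    (k : ℕ) : Prop :=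
  ∃ (v : Fin k → V) (A : Fin k → Finset V),
    Function.Injective v ∧ Function.Injective A ∧
    (∀ i, A i ∈ H) ∧
    (∀ i : Fin k, v i ∈ A i ∧ v (finRotate k i) ∈ A i) ∧
    Function.Injective (fun i => part (v i))

/-! Given eight hyperedges, choose for every covered vertex `v` one hyperedge `c v` through `v` and
join it to the other hyperedges through `v`. By linearity these stars are edge-disjoint, so the sum
of the sizes of the hyperedges is at most the number of covered vertices plus the number of edges
of the resulting graph on eight nodes, and it remains to see that this graph has at most 12 edges.

Without rainbow triangles, three pairwise meeting hyperedges have a common vertex, so the graph is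
triangle-free. Colour each of its edges by the part of the common vertex: without rainbow 4-cycles,
every 4-cycle of the graph is properly coloured but not rainbow. Such a colouring rules out
`K_{2,4}`, and it rules out a node `u` of degree 4 together with three nodes that each see three of
the neighbours of `u`. Counting edges around a node of degree at least 4 then gives the bound. -/

section SquareColoring

variable {W C : Type*} {G : SimpleGraph W} {col : Sym2 W → C}

/-- An edge colouring in which every 4-cycle `x a y b` is properly coloured but not rainbow.
Stating this for one corner `x` suffices, since the condition is imposed on all rotations and
reflections of the cycle. -/
def IsSquareColoring (G : SimpleGraph W) (col : Sym2 W → C) : Prop :=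
  ∀ ⦃x y a b : W⦄, x ≠ y → a ≠ b → G.Adj x a → G.Adj x b → G.Adj y a → G.Adj y b →
    col s(x, a) ≠ col s(x, b) ∧ (col s(x, a) = col s(y, b) ∨ col s(x, b) = col s(y, a))

namespace IsSquareColoring

lemma ne_of_common_neighbor (h : IsSquareColoring G col) {x y a b : W} (hxy : x ≠ y)
    (hab : a ≠ b) (hxa : G.Adj x a) (hxb : G.Adj x b) (hya : G.Adj y a) (hyb : G.Adj y b) :
    col s(x, a) ≠ col s(y, a) := by
  rw [Sym2.eq_swap, Sym2.eq_swap (a := y)]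
  exact (h hab hxy hxa.symm hya.symm hxb.symm hyb.symm).1

lemma cyclic_shift (h : IsSquareColoring G col) {x y a b c : W} (hxy : x ≠ y)
    (hab : a ≠ b) (hac : a ≠ c) (hbc : b ≠ c)
    (hxa : G.Adj x a) (hxb : G.Adj x b) (hxc : G.Adj x c)
    (hya : G.Adj y a) (hyb : G.Adj y b) (hyc : G.Adj y c) :
    (col s(y, a) = col s(x, b) ∧ col s(y, b) = col s(x, c) ∧ col s(y, c) = col s(x, a)) ∨
      (col s(y, a) = col s(x, c) ∧ col s(y, b) = col s(x, a) ∧ col s(y, c) = col s(x, b)) := by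
  obtain ⟨_, hcol_ab⟩ := h hxy hab hxa hxb hya hyb
  obtain ⟨_, hcol_ac⟩ := h hxy hac hxa hxc hya hyc
  obtain ⟨_, hcol_bc⟩ := h hxy hbc hxb hxc hyb hyc
  grind

/-- The colours at `x` are forced by those at `u` up to a rotation of `b, c, d`, and those at `y`
up to a rotation of `a, c, d`; no choice of rotations satisfies the 4-cycle `x c y d`. -/
lemma color_eq_of_adj (h : IsSquareColoring G col) {u x y a b c d : W}
    (hux : u ≠ x) (huy : u ≠ y) (hxy : x ≠ y)
    (hac : a ≠ c) (had : a ≠ d) (hbc : b ≠ c) (hbd : b ≠ d) (hcd : c ≠ d)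
    (hua : G.Adj u a) (hub : G.Adj u b) (huc : G.Adj u c) (hud : G.Adj u d)
    (hxb : G.Adj x b) (hxc : G.Adj x c) (hxd : G.Adj x d)
    (hya : G.Adj y a) (hyc : G.Adj y c) (hyd : G.Adj y d) :
    col s(u, a) = col s(u, b) := by
  have hx := h.cyclic_shift hux hbc hbd hcd hub huc hud hxb hxc hxd
  have hy := h.cyclic_shift huy hac had hcd hua huc hud hya hyc hyd
  obtain ⟨_, hxy_cd⟩ := h hxy hcd hxc hxd hyc hyd
  have hxy_c := h.ne_of_common_neighbor hxy hcd hxc hxd hyc hyd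
  have hxy_d := h.ne_of_common_neighbor hxy hcd.symm hxd hxc hyd hyc
  have hu_cd := (h hux hcd huc hud hxc hxd).1
  grind

variable [Fintype W] [DecidableEq W] [DecidableRel G.Adj]

lemma card_neighborFinset_inter_le_three (h : IsSquareColoring G col) {x y : W} (hxy : x ≠ y) :
    #(G.neighborFinset x ∩ G.neighborFinset y) ≤ 3 := by
  by_contra! hcard
  obtain ⟨a, ha, b, hb, c, hc, d, hd, hab, hac, had, hbc, hbd, hcd⟩ := three_lt_card.1 hcard
  simp only [mem_inter, SimpleGraph.mem_neighborFinset] at ha hb hc hd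
  have habc := h.cyclic_shift hxy hab hac hbc ha.1 hb.1 hc.1 ha.2 hb.2 hc.2
  have habd := h.cyclic_shift hxy hab had hbd ha.1 hb.1 hd.1 ha.2 hb.2 hd.2
  have hne_cd := (h hxy hcd hc.1 hd.1 hc.2 hd.2).1
  have hacd := h.cyclic_shift hxy hac had hcd ha.1 hc.1 hd.1 ha.2 hc.2 hd.2
  grind

lemma card_inter_inter_inter_le_one (h : IsSquareColoring G col) {u x y z : W}
    (hux : u ≠ x) (huy : u ≠ y) (huz : u ≠ z) (hxy : x ≠ y) (hxz : x ≠ z) (hyz : y ≠ z) :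
    #(G.neighborFinset u ∩ (G.neighborFinset x ∩ G.neighborFinset y ∩ G.neighborFinset z)) ≤
      1 := by
  refine card_le_one.2 fun p hp q hq ↦ ?_
  by_contra hpq
  refine (h.card_neighborFinset_inter_le_three hpq).not_gt (three_lt_card.2 ⟨u, ?_, x, ?_, y, ?_,
    z, ?_, hux, huy, huz, hxy, hxz, hyz⟩) <;>
  · simp only [mem_inter, SimpleGraph.mem_neighborFinset] at hp hq ⊢
    grind [G.adj_comm]

lemma exists_neighborFinset_sdiff_eq_singleton (h : IsSquareColoring G col) {u x : W}
    (hu : G.degree u = 4) (hux : u ≠ x)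
    (hx : 3 ≤ #(G.neighborFinset u ∩ G.neighborFinset x)) :
    ∃ a, G.neighborFinset u \ G.neighborFinset x = {a} := by
  have hle := h.card_neighborFinset_inter_le_three hux
  have hadd := card_sdiff_add_card_inter (G.neighborFinset u) (G.neighborFinset x)
  rw [G.card_neighborFinset_eq_degree] at hadd
  exact card_eq_one.1 (by omega)

lemma pairwise_ne_of_sdiff_eq_singleton (h : IsSquareColoring G col) {u x y z a b e : W}
    (hu : G.degree u = 4)
    (hux : u ≠ x) (huy : u ≠ y) (huz : u ≠ z) (hxy : x ≠ y) (hxz : x ≠ z) (hyz : y ≠ z)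
    (ha : G.neighborFinset u \ G.neighborFinset x = {a})
    (hb : G.neighborFinset u \ G.neighborFinset y = {b})
    (he : G.neighborFinset u \ G.neighborFinset z = {e}) :
    a ≠ b ∧ a ≠ e ∧ b ≠ e := by
  have hmissed : G.neighborFinset u \
      (G.neighborFinset x ∩ G.neighborFinset y ∩ G.neighborFinset z) = {a, b, e} := by
    rw [sdiff_inter_distrib_right, sdiff_inter_distrib_right, ha, hb, he, union_assoc]
    rfl
  have hadd := card_sdiff_add_card_inter (G.neighborFinset u)
    (G.neighborFinset x ∩ G.neighborFinset y ∩ G.neighborFinset z)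
  have hle := h.card_inter_inter_inter_le_one hux huy huz hxy hxz hyz
  rw [hmissed, G.card_neighborFinset_eq_degree] at hadd
  have hthree : 3 ≤ #{a, b, e} := by omega
  refine ⟨?_, ?_, ?_⟩ <;> rintro rfl <;> simp at hthree <;> grind [card_le_two]

/-- If three vertices `x`, `y`, `z` each see three of the four neighbours of `u`, they miss distinct
neighbours `a`, `b`, `e`. Then the edges at `u` to `a` and `b` get different colours because of `z`,
but equal ones because of `x` and `y`. -/
lemma exists_card_neighborFinset_inter_lt_three (h : IsSquareColoring G col) {u x y z : W}
    (hu : G.degree u = 4)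
    (hux : u ≠ x) (huy : u ≠ y) (huz : u ≠ z) (hxy : x ≠ y) (hxz : x ≠ z) (hyz : y ≠ z) :
    ∃ w ∈ ({x, y, z} : Finset W), #(G.neighborFinset u ∩ G.neighborFinset w) < 3 := by
  by_contra! hthree
  obtain ⟨a, ha⟩ := h.exists_neighborFinset_sdiff_eq_singleton hu hux (hthree x (by simp))
  obtain ⟨b, hb⟩ := h.exists_neighborFinset_sdiff_eq_singleton hu huy (hthree y (by simp))
  obtain ⟨e, he⟩ := h.exists_neighborFinset_sdiff_eq_singleton hu huz (hthree z (by simp))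
  obtain ⟨hab, hae, hbe⟩ :=
    h.pairwise_ne_of_sdiff_eq_singleton hu hux huy huz hxy hxz hyz ha hb he
  simp only [Finset.ext_iff, mem_sdiff, SimpleGraph.mem_neighborFinset, mem_singleton] at ha hb he
  have hua : G.Adj u a := ((ha a).2 rfl).1
  have hub : G.Adj u b := ((hb b).2 rfl).1
  have hrest : #(G.neighborFinset u \ {a, b}) = 2 := by
    rw [card_sdiff_of_subset (by simp [insert_subset_iff, hua, hub]),
      G.card_neighborFinset_eq_degree, hu, card_pair hab]
  obtain ⟨c, d, hcd, hrest⟩ := card_eq_two.1 hrest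
  simp only [Finset.ext_iff, mem_sdiff, SimpleGraph.mem_neighborFinset, mem_insert,
    mem_singleton] at hrest
  obtain ⟨huc, hc⟩ := (hrest c).2 (.inl rfl)
  obtain ⟨hud, hd⟩ := (hrest d).2 (.inr rfl)
  have adj_of_ne {w m v : W} (hm : ∀ v, G.Adj u v ∧ ¬ G.Adj w v ↔ v = m) (huv : G.Adj u v)
      (hvm : v ≠ m) : G.Adj w v :=
    not_not.1 fun hwv ↦ hvm ((hm v).1 ⟨huv, hwv⟩)
  push Not at hc hd
  refine (h huz hab hua hub (adj_of_ne he hua hae) (adj_of_ne he hub hbe)).1 ?_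
  exact h.color_eq_of_adj hux huy hxy hc.1.symm hd.1.symm hc.2.symm hd.2.symm hcd hua hub huc hud
    (adj_of_ne ha hub hab.symm) (adj_of_ne ha huc hc.1) (adj_of_ne ha hud hd.1)
    (adj_of_ne hb hua hab) (adj_of_ne hb huc hc.2) (adj_of_ne hb hud hd.2)

end IsSquareColoring

section EdgeBound

variable [Fintype W] [DecidableRel G.Adj]

lemma disjoint_neighborFinset_of_adj (hG : G.CliqueFree 3) {x y : W} (hxy : G.Adj x y) :
    Disjoint (G.neighborFinset x) (G.neighborFinset y) := by
  classical
  refine disjoint_left.2 fun a hx hy ↦ ?_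
  rw [SimpleGraph.mem_neighborFinset] at hx hy
  exact hG {x, y, a} (SimpleGraph.is3Clique_triple_iff.2 ⟨hxy, hx, hy⟩)

section DecidableEq

variable [DecidableEq W]

lemma sum_degree_eq_sum_compl_card_inter {I : Finset W} (hI : G.IsIndepSet (I : Set W)) :
    ∑ v ∈ I, G.degree v = ∑ w ∈ Iᶜ, #(I ∩ G.neighborFinset w) := by
  have hout {v : W} (hv : v ∈ I) : G.neighborFinset v = Iᶜ.bipartiteAbove G.Adj v := by
    ext w
    have hw : G.Adj v w → w ∉ I := fun hvw hw ↦ hI hv hw hvw.ne hvw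
    simpa [mem_bipartiteAbove] using hw
  have hin (w : W) : I ∩ G.neighborFinset w = I.bipartiteBelow G.Adj w := by
    ext v
    simp [mem_bipartiteBelow, G.adj_comm]
  calc ∑ v ∈ I, G.degree v = ∑ v ∈ I, #(Iᶜ.bipartiteAbove G.Adj v) :=
        sum_congr rfl fun v hv ↦ by rw [← G.card_neighborFinset_eq_degree, hout hv]
    _ = ∑ w ∈ Iᶜ, #(I.bipartiteBelow G.Adj w) :=
        sum_card_bipartiteAbove_eq_sum_card_bipartiteBelow _
    _ = ∑ w ∈ Iᶜ, #(I ∩ G.neighborFinset w) := by simp only [hin]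

lemma compl_neighborFinset_eq_insert (u : W) :
    (G.neighborFinset u)ᶜ = insert u (Gᶜ.neighborFinset u) := by
  ext w
  by_cases huw : u = w <;> simp [huw, eq_comm]

lemma degree_eq_card_inter_add_card_compl_inter {u w : W} (huw : ¬ G.Adj u w) :
    G.degree w = #(G.neighborFinset u ∩ G.neighborFinset w) +
      #(Gᶜ.neighborFinset u ∩ G.neighborFinset w) := by
  have hcompl : G.neighborFinset w \ G.neighborFinset u =
      Gᶜ.neighborFinset u ∩ G.neighborFinset w := by
    ext v
    simp only [mem_sdiff, mem_inter, SimpleGraph.mem_neighborFinset, SimpleGraph.compl_adj]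
    grind [G.adj_comm]
  rw [← hcompl, inter_comm, card_inter_add_card_sdiff, G.card_neighborFinset_eq_degree]

lemma two_mul_card_edgeFinset_eq (hG : G.CliqueFree 3) (u : W) :
    2 * #G.edgeFinset = 2 * G.degree u +
      ∑ w ∈ Gᶜ.neighborFinset u, (2 * #(G.neighborFinset u ∩ G.neighborFinset w) +
        #(Gᶜ.neighborFinset u ∩ G.neighborFinset w)) := by
  have hindep : G.IsIndepSet (G.neighborFinset u : Set W) := by
    simpa using SimpleGraph.isIndepSet_neighborSet_of_triangleFree G hG u
  have hu : u ∉ Gᶜ.neighborFinset u := by simp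
  rw [← G.sum_degrees_eq_twice_card_edges, ← sum_add_sum_compl (G.neighborFinset u),
    sum_degree_eq_sum_compl_card_inter hindep, ← sum_add_distrib, compl_neighborFinset_eq_insert,
    sum_insert hu, inter_self, G.card_neighborFinset_eq_degree, ← two_mul]
  refine congrArg _ (sum_congr rfl fun w hw ↦ ?_)
  rw [degree_eq_card_inter_add_card_compl_inter (u := u) (by simp_all), two_mul, add_assoc]

lemma card_triple_inter_neighborFinset {x y z : W} (hxy : x ≠ y) (hxz : x ≠ z) (hyz : y ≠ z)
    (w : W) : #({x, y, z} ∩ G.neighborFinset w) =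
      (if G.Adj w x then 1 else 0) + ((if G.Adj w y then 1 else 0) +
        (if G.Adj w z then 1 else 0)) := by
  rw [← filter_mem_eq_inter, card_filter, sum_insert (by simp [hxy, hxz]), sum_pair hyz]
  simp only [SimpleGraph.mem_neighborFinset]

lemma card_inter_add_card_inter_le_of_adj (hG : G.CliqueFree 3) {x y : W} (hxy : G.Adj x y)
    (u : W) :
    #(G.neighborFinset u ∩ G.neighborFinset x) + #(G.neighborFinset u ∩ G.neighborFinset y) ≤
      G.degree u := by
  rw [← card_union_of_disjoint ((disjoint_neighborFinset_of_adj hG hxy).mono inter_subset_right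
    inter_subset_right), ← inter_union_distrib_left]
  exact card_le_card inter_subset_left

namespace IsSquareColoring

lemma card_inter_path_le (h : IsSquareColoring G col) (hG : G.CliqueFree 3)
    {u x y z : W} (hxz : x ≠ z) (hxy : G.Adj x y) (hyz : G.Adj y z) (huy : ¬ G.Adj u y) :
    #(G.neighborFinset u ∩ G.neighborFinset x) + #(G.neighborFinset u ∩ G.neighborFinset y) +
      #(G.neighborFinset u ∩ G.neighborFinset z) ≤ G.degree u + 2 := by
  set X := G.neighborFinset u ∩ G.neighborFinset x
  set Y := G.neighborFinset u ∩ G.neighborFinset y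
  set Z := G.neighborFinset u ∩ G.neighborFinset z
  have hinter : #(X ∩ Z) + 1 ≤ 3 := by
    have hy : y ∉ X ∩ Z := by simp [X, huy]
    rw [← card_insert_of_notMem hy]
    refine (card_le_card ?_).trans (h.card_neighborFinset_inter_le_three hxz)
    exact insert_subset (by simp [hxy, hyz.symm]) (inter_subset_inter inter_subset_right
      inter_subset_right)
  have hunion : #(X ∪ Z) + #Y ≤ G.degree u := by
    have hdisj : Disjoint (X ∪ Z) Y := disjoint_union_left.2
      ⟨(disjoint_neighborFinset_of_adj hG hxy).mono inter_subset_right inter_subset_right,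
        (disjoint_neighborFinset_of_adj hG hyz.symm).mono inter_subset_right inter_subset_right⟩
    rw [← card_union_of_disjoint hdisj, ← G.card_neighborFinset_eq_degree]
    exact card_le_card (union_subset (union_subset inter_subset_left inter_subset_left)
      inter_subset_left)
  have hadd := card_union_add_card_inter X Z
  omega

lemma card_inter_add_adj_le_eight (h : IsSquareColoring G col) (hG : G.CliqueFree 3)
    {u x y z : W} (hu : G.degree u = 4) (hxy : x ≠ y) (hxz : x ≠ z) (hyz : y ≠ z)
    (hux : Gᶜ.Adj u x) (huy : Gᶜ.Adj u y) (huz : Gᶜ.Adj u z) :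
    #(G.neighborFinset u ∩ G.neighborFinset x) + #(G.neighborFinset u ∩ G.neighborFinset y) +
      #(G.neighborFinset u ∩ G.neighborFinset z) + ((if G.Adj x y then 1 else 0) +
        (if G.Adj x z then 1 else 0) + (if G.Adj y z then 1 else 0)) ≤ 8 := by
  have hx := h.card_neighborFinset_inter_le_three hux.ne
  have hy := h.card_neighborFinset_inter_le_three huy.ne
  have hz := h.card_neighborFinset_inter_le_three huz.ne
  obtain ⟨w, hw, hlt⟩ :=
    h.exists_card_neighborFinset_inter_lt_three hu hux.ne huy.ne huz.ne hxy hxz hyz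
  have hsum : #(G.neighborFinset u ∩ G.neighborFinset x) +
      #(G.neighborFinset u ∩ G.neighborFinset y) +
      #(G.neighborFinset u ∩ G.neighborFinset z) ≤ 8 := by
    simp only [mem_insert, mem_singleton] at hw
    obtain rfl | rfl | rfl := hw <;> omega
  split_ifs with hadj_xy hadj_xz hadj_yz hadj_yz hadj_xz hadj_yz hadj_yz
  · exact (hG {x, y, z} (SimpleGraph.is3Clique_triple_iff.2 ⟨hadj_xy, hadj_xz, hadj_yz⟩)).elim
  · have := h.card_inter_path_le hG hyz hadj_xy.symm hadj_xz hux.2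
    omega
  · have := h.card_inter_path_le hG hxz hadj_xy hadj_yz huy.2
    omega
  · have := card_inter_add_card_inter_le_of_adj hG hadj_xy u
    omega
  · have := h.card_inter_path_le hG hxy hadj_xz hadj_yz.symm huz.2
    omega
  · have := card_inter_add_card_inter_le_of_adj hG hadj_xz u
    omega
  · have := card_inter_add_card_inter_le_of_adj hG hadj_yz u
    omega
  · omega

end IsSquareColoring

end DecidableEq

namespace IsSquareColoring

lemma card_edgeFinset_le_of_five_le_degree (h : IsSquareColoring G col) (hG : G.CliqueFree 3)
    (hW : Fintype.card W = 8) {u : W} (hu : 5 ≤ G.degree u) : #G.edgeFinset ≤ 12 := by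
  classical
  have hdeg : #(Gᶜ.neighborFinset u) = 7 - G.degree u := by
    rw [SimpleGraph.card_neighborFinset_eq_degree, SimpleGraph.degree_compl, hW]
  have hlt := G.degree_lt_card_verts u
  have hterm : ∀ w ∈ Gᶜ.neighborFinset u, 2 * #(G.neighborFinset u ∩ G.neighborFinset w) +
      #(Gᶜ.neighborFinset u ∩ G.neighborFinset w) ≤ 6 + (#(Gᶜ.neighborFinset u) - 1) := by
    intro w hw
    have hcommon := h.card_neighborFinset_inter_le_three (Gᶜ.ne_of_adj (by simpa using hw))
    have hcompl : #(Gᶜ.neighborFinset u ∩ G.neighborFinset w) ≤ #(Gᶜ.neighborFinset u) - 1 := by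
      rw [← card_erase_of_mem hw]
      exact card_le_card fun v hv ↦ by
        simp only [mem_inter, mem_erase, SimpleGraph.mem_neighborFinset] at hv ⊢
        exact ⟨hv.2.ne', hv.1⟩
    omega
  have hsum := sum_le_card_nsmul _ _ _ hterm
  rw [smul_eq_mul, hdeg] at hsum
  have heq := two_mul_card_edgeFinset_eq hG u
  rw [hW] at hlt
  interval_cases G.degree u <;> omega

lemma card_edgeFinset_le_of_degree_eq_four (h : IsSquareColoring G col) (hG : G.CliqueFree 3)
    (hW : Fintype.card W = 8) {u : W} (hu : G.degree u = 4) : #G.edgeFinset ≤ 12 := by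
  classical
  have hcard : #(Gᶜ.neighborFinset u) = 3 := by
    rw [SimpleGraph.card_neighborFinset_eq_degree, SimpleGraph.degree_compl, hW, hu]
  obtain ⟨x, y, z, hxy, hxz, hyz, hR⟩ := card_eq_three.1 hcard
  have hcompl : ∀ w ∈ ({x, y, z} : Finset W), Gᶜ.Adj u w := by
    simp only [← hR, SimpleGraph.mem_neighborFinset, imp_self, implies_true]
  have hle := h.card_inter_add_adj_le_eight hG hu hxy hxz hyz (hcompl x (by simp))
    (hcompl y (by simp)) (hcompl z (by simp))
  have heq := two_mul_card_edgeFinset_eq hG u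
  rw [hR, hu, sum_insert (by simp [hxy, hxz]), sum_pair hyz] at heq
  simp only [card_triple_inter_neighborFinset hxy hxz hyz, SimpleGraph.irrefl, if_false,
    G.adj_comm y x, G.adj_comm z] at heq
  omega

lemma card_edgeFinset_le_twelve (h : IsSquareColoring G col) (hG : G.CliqueFree 3)
    (hW : Fintype.card W = 8) : #G.edgeFinset ≤ 12 := by
  by_cases hfour : ∃ u, 4 ≤ G.degree u
  · obtain ⟨u, hu⟩ := hfour
    obtain hu | hu := hu.eq_or_lt
    · exact h.card_edgeFinset_le_of_degree_eq_four hG hW hu.symm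
    · exact h.card_edgeFinset_le_of_five_le_degree hG hW hu
  · push Not at hfour
    have hsum := sum_le_card_nsmul univ (fun u ↦ G.degree u) 3 fun u _ ↦ Nat.le_of_lt_succ (hfour u)
    rw [G.sum_degrees_eq_twice_card_edges, card_univ, hW, smul_eq_mul] at hsum
    omega

end IsSquareColoring

end EdgeBound

end SquareColoring

section Hypergraph

variable {V : Type*} {k : ℕ} {H : Finset (Finset V)} {part : V → Fin k}

lemma HasRainbowCycle.mono {S : Finset (Finset V)} {n : ℕ} (h : HasRainbowCycle S part n)
    (hSH : S ⊆ H) : HasRainbowCycle H part n := by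
  obtain ⟨v, A, hv, hA, hmem, hinc, hpart⟩ := h
  exact ⟨v, A, hv, hA, fun i ↦ hSH (hmem i), hinc, hpart⟩

lemma HasRainbowCycle.of_three {A B C : Finset V} {v w t : V}
    (hA : A ∈ H) (hB : B ∈ H) (hC : C ∈ H) (hAB : A ≠ B) (hBC : B ≠ C) (hAC : A ≠ C)
    (hvA : v ∈ A) (hwA : w ∈ A) (hwB : w ∈ B) (htB : t ∈ B) (htC : t ∈ C) (hvC : v ∈ C)
    (hvw : part v ≠ part w) (hwt : part w ≠ part t) (hvt : part v ≠ part t) :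
    HasRainbowCycle H part 3 := by
  have hpart : Function.Injective fun i ↦ part (![v, w, t] i) := by
    intro i j hij
    fin_cases i <;> fin_cases j <;> simp_all
  refine ⟨![v, w, t], ![A, B, C], .of_comp (f := part) hpart, ?_, ?_, ?_, hpart⟩
  · intro i j hij
    fin_cases i <;> fin_cases j <;> simp_all
  · simp [Fin.forall_fin_succ, hA, hB, hC]
  · intro i
    fin_cases i
    exacts [⟨hvA, hwA⟩, ⟨hwB, htB⟩, ⟨htC, hvC⟩]

lemma HasRainbowCycle.of_four {A B C D : Finset V} {v w t s : V}
    (hA : A ∈ H) (hB : B ∈ H) (hC : C ∈ H) (hD : D ∈ H)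
    (hAB : A ≠ B) (hAC : A ≠ C) (hAD : A ≠ D) (hBC : B ≠ C) (hBD : B ≠ D) (hCD : C ≠ D)
    (hvA : v ∈ A) (hwA : w ∈ A) (hwB : w ∈ B) (htB : t ∈ B) (htC : t ∈ C) (hsC : s ∈ C)
    (hsD : s ∈ D) (hvD : v ∈ D)
    (hvw : part v ≠ part w) (hvt : part v ≠ part t) (hvs : part v ≠ part s)
    (hwt : part w ≠ part t) (hws : part w ≠ part s) (hts : part t ≠ part s) :
    HasRainbowCycle H part 4 := by
  have hpart : Function.Injective fun i ↦ part (![v, w, t, s] i) := by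
    intro i j hij
    fin_cases i <;> fin_cases j <;> simp_all
  refine ⟨![v, w, t, s], ![A, B, C, D], .of_comp (f := part) hpart, ?_, ?_, ?_, hpart⟩
  · intro i j hij
    fin_cases i <;> fin_cases j <;> simp_all
  · simp [Fin.forall_fin_succ, hA, hB, hC, hD]
  · intro i
    fin_cases i
    exacts [⟨hvA, hwA⟩, ⟨hwB, htB⟩, ⟨htC, hsC⟩, ⟨hsD, hvD⟩]

variable [DecidableEq V]

/-- A linear hypergraph: two distinct hyperedges share at most one vertex. -/
def IsLinear (H : Finset (Finset V)) : Prop :=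
  ∀ A ∈ H, ∀ B ∈ H, A ≠ B → (A ∩ B).card ≤ 1

namespace IsLinear

lemma mono {S : Finset (Finset V)} (hH : IsLinear H) (hSH : S ⊆ H) : IsLinear S :=
  fun A hA B hB ↦ hH A (hSH hA) B (hSH hB)

lemma eq_of_mem (hH : IsLinear H) {A B : Finset V} (hA : A ∈ H) (hB : B ∈ H) (hAB : A ≠ B)
    {v w : V} (hvA : v ∈ A) (hvB : v ∈ B) (hwA : w ∈ A) (hwB : w ∈ B) : v = w :=
  card_le_one.1 (hH A hA B hB hAB) v (mem_inter.2 ⟨hvA, hvB⟩) w (mem_inter.2 ⟨hwA, hwB⟩)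

lemma eq_of_not_hasRainbowCycle_three (hH : IsLinear H)
    (hinj : ∀ A ∈ H, Set.InjOn part A) (h3 : ¬ HasRainbowCycle H part 3) {A B C : Finset V}
    (hA : A ∈ H) (hB : B ∈ H) (hC : C ∈ H) (hAB : A ≠ B) (hBC : B ≠ C) (hAC : A ≠ C) {v w t : V}
    (hvA : v ∈ A) (hwA : w ∈ A) (hwB : w ∈ B) (htB : t ∈ B) (htC : t ∈ C) (hvC : v ∈ C) :
    v = w ∧ w = t := by
  by_contra hne
  have hvw : v ≠ w := by
    rintro rfl
    exact hne ⟨rfl, hH.eq_of_mem hB hC hBC hwB hvC htB htC⟩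
  have hwt : w ≠ t := by
    rintro rfl
    exact hvw (hH.eq_of_mem hA hC hAC hvA hvC hwA htC)
  have hvt : v ≠ t := by
    rintro rfl
    exact hvw (hH.eq_of_mem hA hB hAB hvA htB hwA hwB)
  exact h3 <| .of_three hA hB hC hAB hBC hAC hvA hwA hwB htB htC hvC
    ((hinj A hA).ne hvA hwA hvw) ((hinj B hB).ne hwB htB hwt) ((hinj C hC).ne hvC htC hvt)

end IsLinear

end Hypergraph

section LinkGraph

variable {V : Type*} {S : Finset (Finset V)} {c : V → S}

/-- The vertex `v` links `A` and `B` under a choice `c` of one hyperedge `c v` per vertex `v`: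
both hyperedges contain `v` and one of them is the chosen one. -/
def Links (c : V → S) (v : V) (A B : S) : Prop :=
  v ∈ A.1 ∧ v ∈ B.1 ∧ (c v = A ∨ c v = B)

lemma Links.symm {v : V} {A B : S} (h : Links c v A B) : Links c v B A :=
  ⟨h.2.1, h.1, h.2.2.symm⟩

/-- The graph on the hyperedges of `S` in which every vertex `v` contributes the star joining the
chosen hyperedge `c v` to the other hyperedges through `v`. -/
def linkGraph (c : V → S) : SimpleGraph S where
  Adj A B := A ≠ B ∧ ∃ v, Links c v A B
  symm := ⟨fun _ _ ⟨hne, v, hv⟩ ↦ ⟨hne.symm, v, hv.symm⟩⟩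
  loopless := ⟨fun _ h ↦ h.1 rfl⟩

lemma exists_mem_choice (hS : S.Nonempty) : ∃ c : V → S, ∀ A ∈ S, ∀ v ∈ A, v ∈ (c v).1 := by
  have hex : ∀ v, ∃ B : S, ∀ A ∈ S, v ∈ A → v ∈ B.1 := by
    intro v
    by_cases hv : ∃ A ∈ S, v ∈ A
    · obtain ⟨A, hA, hvA⟩ := hv
      exact ⟨⟨A, hA⟩, fun _ _ _ ↦ hvA⟩
    · exact ⟨⟨_, hS.choose_spec⟩, fun A hA hvA ↦ (hv ⟨A, hA, hvA⟩).elim⟩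
  choose c hc using hex
  exact ⟨c, fun A hA v hvA ↦ hc v A hA hvA⟩

section Counting

variable [DecidableEq V]

lemma IsLinear.injOn_incidence_edge (hlin : IsLinear S) (hc : ∀ A ∈ S, ∀ v ∈ A, v ∈ (c v).1) :
    Set.InjOn (fun p : Σ _ : S, V ↦ s(p.1, c p.2)) {p | p.2 ∈ p.1.1 ∧ c p.2 ≠ p.1} := by
  rintro ⟨A, v⟩ ⟨hvA : v ∈ A.1, hv : c v ≠ A⟩ ⟨B, w⟩ ⟨hwB : w ∈ B.1, hw : c w ≠ B⟩ hedge
  have eq_of_mem {u : V} (huA : u ∈ A.1) (huv : u ∈ (c v).1) : v = u :=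
    hlin.eq_of_mem A.2 (c v).2 (Subtype.coe_ne_coe.2 hv.symm) hvA (hc _ A.2 v hvA) huA huv
  obtain ⟨hAB, hvw⟩ | ⟨hAw, hvB⟩ := Sym2.eq_iff.1 hedge <;> dsimp only at *
  · subst hAB
    rw [eq_of_mem hwB (hvw ▸ hc _ A.2 w hwB)]
  · have hvw := eq_of_mem (hAw ▸ hc _ B.2 w hwB) (hvB ▸ hwB)
    exact (hv (by rw [hAw, hvw])).elim

/-- Each incidence `v ∈ A` is charged to the vertex `v` if `A = c v`, and otherwise to the edge
joining `A` to `c v`. -/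
lemma IsLinear.sum_card_le_card_biUnion_add_card_edgeFinset (hlin : IsLinear S)
    (hc : ∀ A ∈ S, ∀ v ∈ A, v ∈ (c v).1) [DecidableRel (linkGraph c).Adj] :
    ∑ A ∈ S, #A ≤ #(S.biUnion id) + #(linkGraph c).edgeFinset := by
  let I : Finset (Σ _ : S, V) := univ.sigma fun A ↦ A.1
  have hI : #I = ∑ A ∈ S, #A := by rw [card_sigma, sum_coe_sort S card]
  rw [← hI, ← card_filter_add_card_filter_not (fun p : Σ _ : S, V ↦ c p.2 = p.1)]
  refine add_le_add (card_le_card_of_injOn Sigma.snd ?_ ?_)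
    (card_le_card_of_injOn (fun p ↦ s(p.1, c p.2)) ?_ ?_)
  · rintro ⟨A, v⟩ hp
    simp only [I, coe_filter, mem_sigma, mem_univ, true_and, Set.mem_ofPred_eq] at hp
    exact mem_biUnion.2 ⟨A, A.2, hp.1⟩
  · rintro ⟨A, v⟩ hp ⟨B, w⟩ hq (rfl : v = w)
    simp only [coe_filter, Set.mem_ofPred_eq] at hp hq
    rw [← hp.2, ← hq.2]
  · rintro ⟨A, v⟩ hp
    simp only [I, coe_filter, mem_sigma, mem_univ, true_and, Set.mem_ofPred_eq] at hp
    rw [mem_coe, SimpleGraph.mem_edgeFinset, SimpleGraph.mem_edgeSet]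
    exact ⟨Ne.symm hp.2, v, hp.1, hc _ A.2 v hp.1, .inr rfl⟩
  · refine (hlin.injOn_incidence_edge hc).mono fun p hp ↦ ?_
    simpa [I] using hp

end Counting

variable [DecidableEq V] {k : ℕ} {part : V → Fin k}

/-- The colouring of pairs of hyperedges by the set of parts that meet their intersection; in a
linear hypergraph this is the part of the common vertex. -/
def meetColor (part : V → Fin k) : Sym2 S → Finset (Fin k) :=
  Sym2.lift ⟨fun A B ↦ (A.1 ∩ B.1).image part, fun A B ↦ by simp only [inter_comm]⟩

namespace IsLinear

lemma meetColor_eq (hlin : IsLinear S) {A B : S} (hAB : A ≠ B) {v : V} (hvA : v ∈ A.1)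
    (hvB : v ∈ B.1) : meetColor part s(A, B) = {part v} := by
  have hinter : A.1 ∩ B.1 = {v} := by
    refine eq_singleton_iff_unique_mem.2 ⟨mem_inter.2 ⟨hvA, hvB⟩, fun w hw ↦ ?_⟩
    obtain ⟨hwA, hwB⟩ := mem_inter.1 hw
    exact hlin.eq_of_mem A.2 B.2 (Subtype.coe_ne_coe.2 hAB) hwA hwB hvA hvB
  change (A.1 ∩ B.1).image part = {part v}
  rw [hinter, image_singleton]

lemma cliqueFree_linkGraph (hlin : IsLinear S) (hinj : ∀ A ∈ S, Set.InjOn part A)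
    (h3 : ¬ HasRainbowCycle S part 3) : (linkGraph c).CliqueFree 3 := by
  intro T hT
  obtain ⟨A, B, C, ⟨hAB, v, hvA, hvB, hv⟩, ⟨hAC, w, hwA, hwC, hw⟩, ⟨hBC, t, htB, htC, ht⟩, -⟩ :=
    SimpleGraph.is3Clique_iff.1 hT
  obtain ⟨rfl, rfl⟩ := hlin.eq_of_not_hasRainbowCycle_three hinj h3 A.2 B.2 C.2
    (Subtype.coe_ne_coe.2 hAB) (Subtype.coe_ne_coe.2 hBC) (Subtype.coe_ne_coe.2 hAC)
    hwA hvA hvB htB htC hwC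
  grind

/-- If `p = q`, then `a`, `b`, `y` meet pairwise, hence in `p`, and `c p` would lie on all four
sides of the 4-cycle. -/
lemma ne_of_links (hlin : IsLinear S) (hinj : ∀ A ∈ S, Set.InjOn part A)
    (h3 : ¬ HasRainbowCycle S part 3)
    {x y a b : S} {p q s t : V} (hxy : x ≠ y) (hab : a ≠ b) (hay : a ≠ y)
    (hby : b ≠ y) (hp : Links c p x a) (hq : Links c q x b) (hs : Links c s y a)
    (ht : Links c t y b) : p ≠ q := by
  rintro rfl
  obtain ⟨rfl, rfl⟩ := hlin.eq_of_not_hasRainbowCycle_three hinj h3 a.2 b.2 y.2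
    (Subtype.coe_ne_coe.2 hab) (Subtype.coe_ne_coe.2 hby) (Subtype.coe_ne_coe.2 hay)
    hs.2.1 hp.2.1 hq.2.1 ht.2.1 ht.1 hs.1
  grind [Links]

lemma isSquareColoring_meetColor (hlin : IsLinear S) (hinj : ∀ A ∈ S, Set.InjOn part A)
    (h3 : ¬ HasRainbowCycle S part 3) (h4 : ¬ HasRainbowCycle S part 4) :
    IsSquareColoring (linkGraph c) (meetColor part) := by
  rintro x y a b hxy hab ⟨hxa, p, hp⟩ ⟨hxb, q, hq⟩ ⟨hya, s, hs⟩ ⟨hyb, t, ht⟩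
  have part_ne {A : S} {v w : V} (hv : v ∈ A.1) (hw : w ∈ A.1) (hvw : v ≠ w) :
      part v ≠ part w :=
    (hinj A A.2).ne hv hw hvw
  have hpq := part_ne hp.1 hq.1 <|
    hlin.ne_of_links hinj h3 hxy hab hya.symm hyb.symm hp hq hs ht
  have hst := part_ne hs.1 ht.1 <|
    hlin.ne_of_links hinj h3 hxy.symm hab hxa.symm hxb.symm hs ht hp hq
  have hps := part_ne hp.2.1 hs.2.1 <|
    hlin.ne_of_links hinj h3 hab hxy hxb hyb hp.symm hs.symm hq.symm ht.symm
  have hqt := part_ne hq.2.1 ht.2.1 <|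
    hlin.ne_of_links hinj h3 hab.symm hxy hxa hya hq.symm ht.symm hp.symm hs.symm
  rw [hlin.meetColor_eq hxa hp.1 hp.2.1, hlin.meetColor_eq hxb hq.1 hq.2.1,
    hlin.meetColor_eq hya hs.1 hs.2.1, hlin.meetColor_eq hyb ht.1 ht.2.1]
  simp only [ne_eq, singleton_inj]
  refine ⟨hpq, ?_⟩
  by_contra! hrainbow
  simp only [← Subtype.coe_ne_coe] at hxy hab hxa hxb hya hyb
  exact h4 <| .of_four x.2 b.2 y.2 a.2 hxb hxy hxa hyb.symm hab.symm hya hp.1 hq.1 hq.2.1 ht.2.1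
    ht.1 hs.1 hs.2.1 hp.2.1 hpq hrainbow.1 hps hqt hrainbow.2 hst.symm

lemma sum_card_le_card_biUnion_add_twelve (hlin : IsLinear S) (hinj : ∀ A ∈ S, Set.InjOn part A)
    (h3 : ¬ HasRainbowCycle S part 3) (h4 : ¬ HasRainbowCycle S part 4) (hS : #S = 8) :
    ∑ A ∈ S, #A ≤ #(S.biUnion id) + 12 := by
  classical
  obtain ⟨c, hc⟩ := exists_mem_choice (card_pos.1 (by omega : 0 < #S))
  refine (hlin.sum_card_le_card_biUnion_add_card_edgeFinset hc).trans (Nat.add_le_add_left ?_ _)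
  exact (hlin.isSquareColoring_meetColor hinj h3 h4).card_edgeFinset_le_twelve
    (hlin.cliqueFree_linkGraph hinj h3) (by rw [Fintype.card_coe, hS])

end IsLinear

end LinkGraph

section Fibers

variable {V ι : Type*} [DecidableEq ι] {f : V → ι} {A : Finset V}

lemma card_eq_of_card_filter_eq_one [Fintype ι] (hf : ∀ i, #{x ∈ A | f x = i} = 1) :
    #A = Fintype.card ι := by
  rw [card_eq_sum_card_fiberwise (t := univ) (f := f) (by simp)]
  simp only [hf, sum_const, card_univ, smul_eq_mul, mul_one]

lemma injOn_of_card_filter_eq_one (hf : ∀ i, #{x ∈ A | f x = i} = 1) : Set.InjOn f A :=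
  fun v hv w hw hvw ↦ card_le_one.1 (hf (f w)).le v (mem_filter.2 ⟨hv, hvw⟩) w
    (mem_filter.2 ⟨hw, rfl⟩)

end Fibers

theorem gfree8_of_no_rainbow_general {V : Type*} [DecidableEq V] {r k : ℕ} (hr : 2 ≤ r)
    (H : Finset (Finset V)) (part : V → Fin k) (huniform : ∀ A ∈ H, #A = r)
    (hinj : ∀ A ∈ H, Set.InjOn part A) (hlin : IsLinear H)
    (h3 : ¬ HasRainbowCycle H part 3) (h4 : ¬ HasRainbowCycle H part 4) :
    GFree H (8 * r - 13) 8 := by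
  intro S hSH hS
  have hle := (hlin.mono hSH).sum_card_le_card_biUnion_add_twelve
    (fun A hA ↦ hinj A (hSH hA)) (fun h ↦ h3 (h.mono hSH)) (fun h ↦ h4 (h.mono hSH)) hS
  rw [sum_const_nat fun A hA ↦ huniform A (hSH hA), hS] at hle
  omega

theorem gfree8_of_no_rainbow {V : Type*} [DecidableEq V] (r : ℕ) (hr : 3 ≤ r)
    (H : Finset (Finset V)) (part : V → Fin r)
    (hpart : ∀ A ∈ H, ∀ i : Fin r, (A.filter fun x => part x = i).card = 1)
    (hlin : ∀ A ∈ H, ∀ B ∈ H, A ≠ B → (A ∩ B).card ≤ 1)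
    (h3 : ¬ HasRainbowCycle H part 3) (h4 : ¬ HasRainbowCycle H part 4) :
    GFree H (8 * r - 13) 8 :=
  gfree8_of_no_rainbow_general (Nat.le_of_succ_le hr) H part
    (fun A hA ↦ (card_eq_of_card_filter_eq_one (hpart A hA)).trans (Fintype.card_fin r))
    (fun A hA ↦ injOn_of_card_filter_eq_one (hpart A hA)) hlin h3 h4
end

section
/- For every integer r ≥ 4 and every real ε > 0 there exists N such that for every integer n ≥ N there exist an r-element set R ⊆ {1, …, n} and an R_4-sum-free set M ⊆ {1, …, n} with |M| > n^{1−ε}. -/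
open Finset

/-- `M` is `R_L`-sum-free: for every `3 ≤ l ≤ L` and every sequence `b₁, …, b_l` of `l`
distinct elements of `R`, the only solutions in `M` of
`(b₂−b₁)m₁ + (b₃−b₂)m₂ + ⋯ + (b₁−b_l)m_l = 0` (over `ℤ`) are the trivial ones
`m₁ = ⋯ = m_l`. -/
def RLSumFree (R : Finset ℕ) (L : ℕ) (M : Finset ℕ) : Prop :=
  ∀ l : ℕ, 3 ≤ l → l ≤ L →
    ∀ b : Fin l → ℕ, Function.Injective b → (∀ i, b i ∈ R) →
      ∀ m : Fin l → ℕ, (∀ i, m i ∈ M) →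
        (∑ i : Fin l, ((b (finRotate l i) : ℤ) - (b i : ℤ)) * (m i : ℤ)) = 0 →
        ∀ i j, m i = m j

/-!
Take polynomials `b i` whose values at suitable integers realise every ordering of the indices, and
let `R = {b i (t)}` for a large base `t`. The elements of `M` encode vectors of polynomials `v`,
each with few and small coefficients, by two nested base expansions. All `v` are chosen on a common
sphere `∑ v_c² = const`; by the pigeonhole principle for the Gram matrix of the digits this costs
only a factor polynomial in the dimension.

A cyclic equation over `R` then has no carries, so it is a polynomial identity `∑ βᵢ vᵢ = 0`, where
`∑ βᵢ = 0` and `βᵢ` is the difference of cyclically consecutive polynomials `b k`. At a point where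
these `b k` increase along the sequence, every `βᵢ` but the last is positive. With `u` the last of
the vectors, the sphere condition gives `∑ βᵢ ‖vᵢ - u‖² = 0`, a sum with positive coefficients near
that point, which forces `vᵢ = u`.
-/

section Polynomials

open Polynomial

variable {ι κ : Type*}

/-- The `ℓ¹` norm of the coefficient sequence of an integer polynomial. It controls carries when an
identity between integers written in base `t` is read as an identity between polynomials in `t`. -/
def l1Norm (p : ℤ[X]) : ℕ := ∑ n ∈ p.support, (p.coeff n).natAbs

lemma abs_coeff_mul_le_l1Norm_mul {p v : ℤ[X]} {s : ℕ} (hv : ∀ n, |v.coeff n| ≤ s) (n : ℕ) :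
    |(p * v).coeff n| ≤ l1Norm p * s := by
  calc |(p * v).coeff n|
      = |∑ i ∈ p.support, p.coeff i * (X ^ i * v).coeff n| := by
        conv_lhs => rw [p.as_sum_support_C_mul_X_pow, Finset.sum_mul, finsetSum_coeff]
        simp only [mul_assoc, coeff_C_mul]
    _ ≤ ∑ i ∈ p.support, |p.coeff i * (X ^ i * v).coeff n| := abs_sum_le_sum_abs _ _
    _ ≤ ∑ i ∈ p.support, |p.coeff i| * s := by
        gcongr with i
        rw [abs_mul, coeff_X_pow_mul']
        gcongr
        split_ifs
        · exact hv _
        · simp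
    _ = l1Norm p * s := by simp [l1Norm, Finset.sum_mul]

lemma abs_coeff_le_l1Norm (p : ℤ[X]) (n : ℕ) : |p.coeff n| ≤ l1Norm p := by
  simpa using abs_coeff_mul_le_l1Norm_mul (p := p) (v := 1) (s := 1)
    (fun n ↦ by rw [coeff_one]; split_ifs <;> simp) n

lemma abs_eval_le_l1Norm_mul_pow {p : ℤ[X]} {g t : ℕ} (hp : p.natDegree ≤ g) (ht : 0 < t) :
    |p.eval (t : ℤ)| ≤ l1Norm p * t ^ g := by
  calc |p.eval (t : ℤ)|
      ≤ ∑ i ∈ p.support, |p.coeff i * (t : ℤ) ^ i| := by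
        rw [eval_eq_sum, Polynomial.sum_def]
        exact abs_sum_le_sum_abs _ _
    _ ≤ ∑ i ∈ p.support, |p.coeff i| * (t : ℤ) ^ g := by
        gcongr with i hi
        rw [abs_mul, abs_of_nonneg (by positivity : (0 : ℤ) ≤ (t : ℤ) ^ i)]
        gcongr
        · exact_mod_cast ht
        · exact (le_natDegree_of_mem_supp i hi).trans hp
    _ = l1Norm p * t ^ g := by simp [l1Norm, Finset.sum_mul]

lemma eq_zero_of_abs_coeff_lt_of_eval_eq_zero {p : ℤ[X]} {t : ℤ} (hp : ∀ n, |p.coeff n| < t)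
    (h : p.eval t = 0) : p = 0 := by
  induction p using recOnHorner with
  | M0 => rfl
  | MC p a hp₀ ha _ =>
    have h_dvd : t ∣ a := by
      obtain ⟨p', rfl⟩ := X_dvd_iff.2 hp₀
      simp only [eval_add, eval_mul, eval_X, eval_C] at h
      exact ⟨-p'.eval t, by linarith⟩
    exact absurd (Int.eq_zero_of_abs_lt_dvd h_dvd (by simpa [hp₀] using hp 0)) ha
  | MX p _ ih =>
    have ht : t ≠ 0 := ((abs_nonneg _).trans_lt (hp 0)).ne'
    simp only [eval_mul, eval_X, mul_eq_zero, ht, or_false] at h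
    rw [ih (fun n ↦ by simpa using hp (n + 1)) h, zero_mul]

lemma eq_zero_of_abs_lt_of_sum_mul_pow_eq_zero {D : ℕ} {f : Fin D → ℤ} {B : ℤ} (hB : 0 < B)
    (hf : ∀ c, |f c| < B) (h : ∑ c, f c * B ^ (c : ℕ) = 0) : f = 0 := by
  refine injective_ofFn D ((eq_zero_of_abs_coeff_lt_of_eval_eq_zero (t := B) (fun n ↦ ?_) ?_).trans
    (map_zero _).symm)
  · rcases lt_or_ge n D with hn | hn
    · simpa [hn] using hf ⟨n, hn⟩
    · simpa [hn] using hB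
  · simpa [ofFn_eq_sum_monomial, eval_finsetSum] using h

lemma sum_ofFn_sq_eq_sum_monomial {R : Type*} [CommSemiring R] [DecidableEq R] [Fintype κ]
    {q : ℕ} (a : κ → Fin q → R) :
    ∑ c, ofFn q (a c) ^ 2 =
      ∑ j : Fin q, ∑ j' : Fin q, monomial ((j : ℕ) + j') (∑ c, a c j * a c j') := by
  simp only [ofFn_eq_sum_monomial, sq, Finset.sum_mul_sum, monomial_mul_monomial, map_sum]
  rw [Finset.sum_comm]
  exact Finset.sum_congr rfl fun j _ ↦ Finset.sum_comm

-- `∑ βᵢ ‖vᵢ - u‖² = (N + ‖u‖²) ∑ βᵢ - 2 ⟨u, ∑ βᵢ vᵢ⟩`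
lemma sum_mul_sub_sq_eq_zero {A : Type*} [CommRing A] [Fintype ι] [Fintype κ] {β : ι → A}
    {v : ι → κ → A} {N : A} (hβ : ∑ i, β i = 0) (hv : ∀ c, ∑ i, β i * v i c = 0)
    (hN : ∀ i, ∑ c, v i c ^ 2 = N) (u : κ → A) :
    ∑ i, ∑ c, β i * (v i c - u c) ^ 2 = 0 := by
  calc ∑ i, ∑ c, β i * (v i c - u c) ^ 2
      = ∑ i, (β i * (∑ c, v i c ^ 2 + ∑ c, u c ^ 2) - ∑ c, 2 * u c * (β i * v i c)) := by
        simp only [← Finset.sum_add_distrib, Finset.mul_sum, ← Finset.sum_sub_distrib]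
        refine Finset.sum_congr rfl fun i _ ↦ Finset.sum_congr rfl fun c _ ↦ ?_
        ring
    _ = (∑ i, β i) * (N + ∑ c, u c ^ 2) - ∑ c, 2 * u c * ∑ i, β i * v i c := by
        simp only [hN, Finset.sum_sub_distrib, Finset.sum_mul, Finset.mul_sum]
        rw [Finset.sum_comm (γ := κ)]
    _ = 0 := by simp [hβ, hv]

section Ordered

variable {R : Type*} [CommRing R] [LinearOrder R] [IsStrictOrderedRing R]

lemma X_sub_C_pow_dvd_of_sum_mul_sq_eq_zero {s : Finset ι} {β W : ι → R[X]} {x : R}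
    (hβ : ∀ i ∈ s, 0 < (β i).eval x) (h : ∑ i ∈ s, β i * W i ^ 2 = 0) (n : ℕ) :
    ∀ i ∈ s, (X - C x) ^ n ∣ W i := by
  induction n with
  | zero => simp
  | succ n ih =>
    choose! V hV using ih
    have h_sum : ∑ i ∈ s, β i * V i ^ 2 = 0 := by
      have h_factor : ((X - C x) ^ n) ^ 2 * ∑ i ∈ s, β i * V i ^ 2 = 0 := by
        rw [← h, Finset.mul_sum]
        refine Finset.sum_congr rfl fun i hi ↦ ?_
        rw [hV i hi]
        ring
      exact (mul_eq_zero.1 h_factor).resolve_left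
        (pow_ne_zero _ (pow_ne_zero _ (X_sub_C_ne_zero x)))
    have h_eval : ∑ i ∈ s, (β i).eval x * (V i).eval x ^ 2 = 0 := by
      simpa [eval_finsetSum] using congrArg (eval x) h_sum
    intro i hi
    have h_root : (V i).eval x = 0 := by
      have h_term := (Finset.sum_eq_zero_iff_of_nonneg fun i hi ↦
        mul_nonneg (hβ i hi).le (sq_nonneg _)).1 h_eval i hi
      simpa [(hβ i hi).ne'] using h_term
    rw [hV i hi, pow_succ]
    exact mul_dvd_mul_left _ (dvd_iff_isRoot.2 h_root)

lemma eq_zero_of_sum_mul_sq_eq_zero {s : Finset ι} {β W : ι → R[X]} {x : R}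
    (hβ : ∀ i ∈ s, 0 < (β i).eval x) (h : ∑ i ∈ s, β i * W i ^ 2 = 0) :
    ∀ i ∈ s, W i = 0 := fun i hi ↦
  eq_zero_of_dvd_of_natDegree_lt
    (X_sub_C_pow_dvd_of_sum_mul_sq_eq_zero hβ h ((W i).natDegree + 1) i hi)
    (by rw [natDegree_pow, natDegree_X_sub_C, mul_one]; exact Nat.lt_succ_self _)

lemma eq_of_sum_mul_eq_zero_of_sum_sq_eq [Fintype ι] [Fintype κ] {β : ι → R[X]} {v : ι → κ → R[X]}
    {i₀ : ι} {x : R} (hβ : ∑ i, β i = 0) (hpos : ∀ i ≠ i₀, 0 < (β i).eval x)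
    (hv : ∀ c, ∑ i, β i * v i c = 0) (hsq : ∀ i, ∑ c, v i c ^ 2 = ∑ c, v i₀ c ^ 2) (i : ι) :
    v i = v i₀ := by
  classical
  rcases eq_or_ne i i₀ with rfl | hi
  · rfl
  have h_sum : ∑ p ∈ univ.erase i₀ ×ˢ univ, β p.1 * (v p.1 p.2 - v i₀ p.2) ^ 2 = 0 := by
    rw [Finset.sum_product, Finset.sum_erase _ (by simp)]
    exact sum_mul_sub_sq_eq_zero hβ hv hsq (v i₀)
  funext c
  exact sub_eq_zero.1 (eq_zero_of_sum_mul_sq_eq_zero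
    (fun p hp ↦ hpos p.1 (ne_of_mem_erase (mem_product.1 hp).1)) h_sum (i, c) (by simp [hi]))

end Ordered

/-- Every ordering of the indices is realised by the values of the polynomials `b i` at some
integer. The ordering is encoded by a function `f : ι → ℕ` that increases along it. -/
def RealizesOrders (b : ι → ℤ[X]) : Prop :=
  ∀ f : ι → ℕ, ∃ x : ℤ, ∀ i j, f i < f j → (b i).eval x < (b j).eval x

lemma RealizesOrders.injective {b : ι → ℤ[X]} (hb : RealizesOrders b) : Function.Injective b := by
  classical
  intro i j hij
  by_contra hne
  obtain ⟨x, hx⟩ := hb (Pi.single j 1)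
  exact (hx i j (by simp [hne])).ne (by rw [hij])

lemma exists_nonneg_eval_eq_mul {α : Type*} [Finite α] (v : α → ι → ℕ) :
    ∃ b : ι → ℤ[X], (∀ i t, 0 ≤ (b i).eval t) ∧
      ∀ p, ∃ (x : ℤ) (c : ℤ), 0 < c ∧ ∀ i, (b i).eval x = v p i * c := by
  classical
  have := Fintype.ofFinite α
  obtain ⟨x, hx⟩ := Countable.exists_injective_nat α
  let node (p : α) : ℤ := x p
  have h_node : Function.Injective node := Nat.cast_injective.comp hx
  let Q (p : α) : ℤ[X] := Lagrange.nodal (univ.erase p) node ^ 2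
  have hQ_zero {p p' : α} (h : p' ≠ p) : (Q p').eval (node p) = 0 := by
    simp [Q, Lagrange.eval_nodal_at_node (mem_erase.2 ⟨h.symm, mem_univ p⟩)]
  have hQ_pos (p : α) : 0 < (Q p).eval (node p) := by
    rw [eval_pow, sq_pos_iff]
    exact Lagrange.eval_nodal_not_at_node fun p' hp' h ↦ ne_of_mem_erase hp' (h_node h).symm
  refine ⟨fun i ↦ ∑ p, C (v p i : ℤ) * Q p, fun i t ↦ ?_,
    fun p ↦ ⟨node p, (Q p).eval (node p), hQ_pos p, fun i ↦ ?_⟩⟩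
  · simp only [eval_finsetSum, eval_mul, eval_C, Q, eval_pow]
    positivity
  · simp only [eval_finsetSum, eval_mul, eval_C]
    exact Fintype.sum_eq_single p fun p' h ↦ by rw [hQ_zero h, mul_zero]

lemma exists_realizesOrders (ι : Type*) [Finite ι] :
    ∃ b : ι → ℤ[X], RealizesOrders b ∧ ∀ i t, 0 < (b i).eval t := by
  -- An ordering matters only through its finitely many comparisons, so one representative per
  -- set of comparisons suffices.
  let comparisons (f : ι → ℕ) : Set (ι × ι) := {p | f p.1 < f p.2}
  obtain ⟨b, hb_nonneg, hb⟩ := exists_nonneg_eval_eq_mul (Function.invFun comparisons)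
  refine ⟨fun i ↦ b i + 1, fun f ↦ ?_, fun i t ↦ ?_⟩
  · obtain ⟨x, c, hc, hx⟩ := hb (comparisons f)
    have h_rep : comparisons (Function.invFun comparisons (comparisons f)) = comparisons f :=
      Function.invFun_eq ⟨f, rfl⟩
    refine ⟨x, fun i j hij ↦ ?_⟩
    have h_lt : (i, j) ∈ comparisons (Function.invFun comparisons (comparisons f)) := by
      rw [h_rep]
      exact hij
    simp only [eval_add, eval_one, hx, add_lt_add_iff_right]
    exact mul_lt_mul_of_pos_right (Nat.cast_lt.2 h_lt) hc
  · simpa [Int.lt_add_one_iff] using hb_nonneg i t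

end Polynomials

section Encoding

open Polynomial

variable {s t q D : ℕ}

/-- The polynomial whose coefficients are the given digits: the digits are read in an indeterminate
base, of which the base `t` used in `blockEncode` is a specialisation. -/
noncomputable def digitPoly (f : Fin q → Fin s) : ℤ[X] := ofFn q fun j ↦ ((f j : ℕ) : ℤ)

lemma digitPoly_injective : Function.Injective (digitPoly : (Fin q → Fin s) → ℤ[X]) :=
  (injective_ofFn q).comp fun _ _ h ↦ funext fun j ↦ Fin.ext (Nat.cast_injective (congrFun h j))

lemma abs_coeff_digitPoly_le (f : Fin q → Fin s) (n : ℕ) : |(digitPoly f).coeff n| ≤ s := by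
  rcases lt_or_ge n q with hn | hn
  · simp [digitPoly, hn]
  · simp [digitPoly, hn]

lemma eval_digitPoly (hst : s ≤ t) (f : Fin q → Fin s) :
    (digitPoly f).eval (t : ℤ) = (finFunctionFinEquiv fun j ↦ Fin.castLE hst (f j) : ℕ) := by
  simp [digitPoly, ofFn_eq_sum_monomial, eval_finsetSum]

lemma abs_eval_digitPoly_lt (hst : s ≤ t) (f : Fin q → Fin s) :
    |(digitPoly f).eval (t : ℤ)| < t ^ q := by
  rw [eval_digitPoly hst, Nat.abs_cast]
  exact_mod_cast Fin.is_lt _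

/-- The number whose `D` digits in base `t ^ (q + g + 1)` are numbers with `q` digits in base `t`,
the inner digits being less than `s`. The `g + 1` spare inner places make room for multiplication by
polynomials of degree at most `g` with small coefficients. -/
def blockEncode (g D : ℕ) (hs : 0 < s) (hst : s ≤ t) :
    (Fin D → Fin q → Fin s) ↪ Fin ((t ^ (q + g + 1)) ^ D) :=
  ((Fin.castLEEmb hst).arrowCongrRight.trans
    (finFunctionFinEquiv.toEmbedding.trans
      (Fin.castLEEmb (Nat.pow_le_pow_right (hs.trans_le hst) (by omega))))).arrowCongrRight.trans
        finFunctionFinEquiv.toEmbedding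

lemma cast_blockEncode (g : ℕ) (hs : 0 < s) (hst : s ≤ t) (a : Fin D → Fin q → Fin s) :
    ((blockEncode g D hs hst a : ℕ) : ℤ) =
      ∑ c, (digitPoly (a c)).eval (t : ℤ) * ((t : ℤ) ^ (q + g + 1)) ^ (c : ℕ) := by
  simp only [eval_digitPoly hst]
  exact_mod_cast finFunctionFinEquiv_apply _

section Equation

variable {ι : Type*} [Fintype ι] {β : ι → ℤ[X]} {g : ℕ}

lemma abs_sum_eval_mul_eval_digitPoly_lt (hs : 0 < s) (hst : s ≤ t)
    (hdeg : ∀ i, (β i).natDegree ≤ g) (hnorm : (∑ i, l1Norm (β i)) * s < t)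
    (f : ι → Fin q → Fin s) :
    |∑ i, (β i).eval (t : ℤ) * (digitPoly (f i)).eval (t : ℤ)| < (t : ℤ) ^ (q + g + 1) := by
  have ht : 0 < t := hs.trans_le hst
  have h_norm_lt : (∑ i, l1Norm (β i) : ℤ) < t := by
    exact_mod_cast (Nat.le_mul_of_pos_right _ hs).trans_lt hnorm
  calc |∑ i, (β i).eval (t : ℤ) * (digitPoly (f i)).eval (t : ℤ)|
      ≤ ∑ i, |(β i).eval (t : ℤ)| * |(digitPoly (f i)).eval (t : ℤ)| := by
        simpa only [abs_mul] using abs_sum_le_sum_abs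
          (fun i ↦ (β i).eval (t : ℤ) * (digitPoly (f i)).eval (t : ℤ)) univ
    _ ≤ ∑ i, l1Norm (β i) * (t : ℤ) ^ g * (t : ℤ) ^ q := by
        gcongr with i
        · exact abs_eval_le_l1Norm_mul_pow (hdeg i) ht
        · exact (abs_eval_digitPoly_lt hst _).le
    _ = (∑ i, l1Norm (β i) : ℤ) * ((t : ℤ) ^ g * (t : ℤ) ^ q) := by
        simp only [mul_assoc, Finset.sum_mul]
    _ < t * ((t : ℤ) ^ g * (t : ℤ) ^ q) := by gcongr
    _ = (t : ℤ) ^ (q + g + 1) := by ring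

-- No carries occur, neither between the outer digits nor between the inner ones.
lemma sum_mul_digitPoly_eq_zero (hs : 0 < s) (hst : s ≤ t) (hdeg : ∀ i, (β i).natDegree ≤ g)
    (hnorm : (∑ i, l1Norm (β i)) * s < t) {a : ι → Fin D → Fin q → Fin s}
    (h : ∑ i, (β i).eval (t : ℤ) * (blockEncode g D hs hst (a i) : ℕ) = 0) (c : Fin D) :
    ∑ i, β i * digitPoly (a i c) = 0 := by
  have h_outer : (fun c ↦ ∑ i, (β i).eval (t : ℤ) * (digitPoly (a i c)).eval (t : ℤ)) = 0 := by
    refine eq_zero_of_abs_lt_of_sum_mul_pow_eq_zero (B := (t : ℤ) ^ (q + g + 1))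
      (pow_pos (Nat.cast_pos.2 (hs.trans_le hst)) _)
      (fun c ↦ abs_sum_eval_mul_eval_digitPoly_lt hs hst hdeg hnorm fun i ↦ a i c) ?_
    simp only [cast_blockEncode, Finset.mul_sum, Finset.sum_mul] at h ⊢
    rw [Finset.sum_comm]
    simpa only [mul_assoc] using h
  refine eq_zero_of_abs_coeff_lt_of_eval_eq_zero (t := t) (fun n ↦ ?_) ?_
  · calc |(∑ i, β i * digitPoly (a i c)).coeff n|
        ≤ ∑ i, |(β i * digitPoly (a i c)).coeff n| := by
          rw [finsetSum_coeff]
          exact abs_sum_le_sum_abs _ _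
      _ ≤ ∑ i, (l1Norm (β i) : ℤ) * s := by
          gcongr with i
          exact abs_coeff_mul_le_l1Norm_mul (abs_coeff_digitPoly_le _) n
      _ < t := by
          rw [← Finset.sum_mul]
          exact_mod_cast hnorm
  · simpa only [eval_finsetSum, eval_mul, Pi.zero_apply] using congrFun h_outer c

end Equation

/-- The Gram matrix of the columns of a matrix of digits. Fixing it makes all the vectors
`c ↦ digitPoly (a c)` lie on a common sphere in `ℤ[X] ^ D`. -/
def digitGram (a : Fin D → Fin q → Fin s) (j j' : Fin q) : ℕ := ∑ c, (a c j : ℕ) * a c j'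

lemma sum_digitPoly_sq_eq_of_digitGram_eq {a a' : Fin D → Fin q → Fin s}
    (h : digitGram a = digitGram a') :
    ∑ c, digitPoly (a c) ^ 2 = ∑ c, digitPoly (a' c) ^ 2 := by
  have h_gram (a : Fin D → Fin q → Fin s) :
      ∑ c, digitPoly (a c) ^ 2 =
        ∑ j : Fin q, ∑ j' : Fin q, monomial ((j : ℕ) + j') (digitGram a j j' : ℤ) := by
    simpa [digitGram, digitPoly] using sum_ofFn_sq_eq_sum_monomial fun c j ↦ ((a c j : ℕ) : ℤ)
  rw [h_gram, h_gram, h]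

lemma exists_pow_le_mul_card_digitGram_fiber (D q s : ℕ) :
    ∃ G, ((s : ℝ) ^ q) ^ D ≤
      ((s : ℝ) ^ 2 * D + 1) ^ (q * q) * #{a : Fin D → Fin q → Fin s | digitGram a = G} := by
  classical
  let T : Finset (Fin q → Fin q → ℕ) :=
    Fintype.piFinset fun _ ↦ Fintype.piFinset fun _ ↦ range (s ^ 2 * D + 1)
  have h_maps (a : Fin D → Fin q → Fin s) : digitGram a ∈ T := by
    simp only [T, Fintype.mem_piFinset, mem_range, Order.lt_add_one_iff]
    intro j j'
    calc ∑ c, (a c j : ℕ) * a c j' ≤ ∑ _c : Fin D, s * s := by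
          gcongr <;> exact (Fin.is_lt _).le
      _ = s ^ 2 * D := by simp; ring
  have h_card : (#T : ℝ) = ((s : ℝ) ^ 2 * D + 1) ^ (q * q) := by
    simp [T, Fintype.card_piFinset, pow_mul]
  obtain ⟨G, -, hG⟩ := exists_le_card_fiber_of_nsmul_le_card_of_maps_to (s := univ) (t := T)
    (f := digitGram) (b := ((s : ℝ) ^ q) ^ D / ((s : ℝ) ^ 2 * D + 1) ^ (q * q))
    (fun a _ ↦ h_maps a) ⟨0, by simp [T, Fintype.mem_piFinset]⟩
    (by
      rw [nsmul_eq_mul, h_card, mul_div_cancel₀ _ (by positivity)]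
      simp)
  exact ⟨G, (div_le_iff₀' (by positivity)).1 hG⟩

end Encoding

section SumFree

open Polynomial

variable {ι : Type*} {b : ι → ℤ[X]} {A g s t q : ℕ}

lemma RealizesOrders.eval_injective (hb : RealizesOrders b)
    (hnorm : ∀ i j, l1Norm (b j - b i) < t) :
    Function.Injective fun i ↦ (b i).eval (t : ℤ) := by
  intro i j hij
  refine (hb.injective (sub_eq_zero.1 (eq_zero_of_abs_coeff_lt_of_eval_eq_zero (t := t)
    (fun n ↦ (abs_coeff_le_l1Norm _ n).trans_lt (Nat.cast_lt.2 (hnorm i j))) ?_))).symm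
  simpa [sub_eq_zero] using hij.symm

lemma RealizesOrders.exists_nat_eval_eq (hb : RealizesOrders b)
    (hnorm : ∀ i j, l1Norm (b j - b i) < t) (hpos : ∀ i, 0 < (b i).eval (t : ℤ)) :
    ∃ ρ : ι → ℕ, Function.Injective ρ ∧ (∀ i, 0 < ρ i) ∧ ∀ i, (ρ i : ℤ) = (b i).eval (t : ℤ) := by
  choose ρ hρ using fun i ↦ Int.eq_ofNat_of_zero_le (hpos i).le
  refine ⟨ρ, fun i j hij ↦ hb.eval_injective hnorm ?_, fun i ↦ ?_, fun i ↦ (hρ i).symm⟩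
  · simp only [hρ, hij]
  · exact_mod_cast (hρ i).symm ▸ hpos i

lemma RealizesOrders.exists_forall_eval_sub_pos (hb : RealizesOrders b) {l : ℕ}
    {k : Fin (l + 1) → ι} (hk : Function.Injective k) :
    ∃ x : ℤ, ∀ i ≠ Fin.last l, 0 < (b (k (finRotate _ i)) - b (k i)).eval x := by
  obtain ⟨x, hx⟩ := hb (Function.extend k (fun i ↦ (i : ℕ)) 0)
  refine ⟨x, fun i hi ↦ ?_⟩
  rw [eval_sub, sub_pos]
  apply hx
  rw [hk.extend_apply, hk.extend_apply, finRotate_apply, Fin.val_fin_lt, Fin.lt_add_one_iff]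
  exact Fin.lt_last_iff_ne_last.2 hi

variable [Fintype ι]

lemma RealizesOrders.rlSumFree (hb : RealizesOrders b) (hs : 0 < s) (hst : s ≤ t)
    (hdeg : ∀ i j, (b j - b i).natDegree ≤ g) (hnorm : ∀ i j, l1Norm (b j - b i) ≤ A)
    (ht : Fintype.card ι * A * s < t) {ρ : ι → ℕ} (hρ : ∀ i, (ρ i : ℤ) = (b i).eval (t : ℤ))
    {D : ℕ} {S : Finset (Fin D → Fin q → Fin s)} {G : Fin q → Fin q → ℕ}
    (hS : ∀ a ∈ S, digitGram a = G) (L : ℕ) :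
    RLSumFree (univ.image ρ) L (S.image fun a ↦ (blockEncode g D hs hst a : ℕ) + 1) := by
  rintro (_ | l) hl - x hx hxR m hm h_sum
  · omega
  simp only [mem_image, mem_univ, true_and] at hxR hm
  choose k hk using hxR
  choose a ha hma using hm
  have hk_inj : Function.Injective k := fun i j h ↦ hx (by rw [← hk, ← hk, h])
  let β (i : Fin (l + 1)) : ℤ[X] := b (k (finRotate _ i)) - b (k i)
  have hβ_sum : ∑ i, β i = 0 := by
    rw [Finset.sum_sub_distrib, Equiv.sum_comp (finRotate (l + 1)) fun i ↦ b (k i), sub_self]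
  have hβ_norm : (∑ i, l1Norm (β i)) * s < t := by
    calc (∑ i, l1Norm (β i)) * s ≤ (Fintype.card (Fin (l + 1)) * A) * s := by
          gcongr
          exact Finset.sum_le_card_nsmul _ _ _ fun i _ ↦ hnorm _ _
      _ ≤ Fintype.card ι * A * s := by
          gcongr
          exact Fintype.card_le_of_injective k hk_inj
      _ < t := ht
  have h_eq : ∑ i, (β i).eval (t : ℤ) * (blockEncode g D hs hst (a i) : ℕ) = 0 := by
    have h_const : ∑ i, (β i).eval (t : ℤ) = 0 := by rw [← eval_finsetSum, hβ_sum, eval_zero]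
    have h_diff (i) : (x (finRotate _ i) : ℤ) - x i = (β i).eval (t : ℤ) := by
      simp only [β, eval_sub, ← hk, hρ]
    simpa only [h_diff, ← hma, Nat.cast_add, Nat.cast_one, mul_add, mul_one,
      Finset.sum_add_distrib, h_const, add_zero] using h_sum
  obtain ⟨y, hβ_pos⟩ := hb.exists_forall_eval_sub_pos hk_inj
  have h_last (i) : a i = a (Fin.last l) := by
    have h_poly := eq_of_sum_mul_eq_zero_of_sum_sq_eq (v := fun i c ↦ digitPoly (a i c)) hβ_sum
      hβ_pos (sum_mul_digitPoly_eq_zero hs hst (fun i ↦ hdeg _ _) hβ_norm h_eq)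
      (fun i ↦ sum_digitPoly_sq_eq_of_digitGram_eq ((hS _ (ha i)).trans (hS _ (ha _)).symm)) i
    exact funext fun c ↦ digitPoly_injective (congrFun h_poly c)
  intro i j
  rw [← hma, ← hma, h_last i, h_last j]

lemma RealizesOrders.exists_rlSumFree (hb : RealizesOrders b) (hs : 0 < s) (hst : s ≤ t)
    (hdeg : ∀ i j, (b j - b i).natDegree ≤ g) (hnorm : ∀ i j, l1Norm (b j - b i) ≤ A)
    (ht : Fintype.card ι * A * s < t) {ρ : ι → ℕ} (hρ : ∀ i, (ρ i : ℤ) = (b i).eval (t : ℤ))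
    (q D : ℕ) :
    ∃ M ⊆ Icc 1 ((t ^ (q + g + 1)) ^ D), (∀ L, RLSumFree (univ.image ρ) L M) ∧
      ((s : ℝ) ^ q) ^ D ≤ ((s : ℝ) ^ 2 * D + 1) ^ (q * q) * #M := by
  obtain ⟨G, hG⟩ := exists_pow_le_mul_card_digitGram_fiber D q s
  refine ⟨({a | digitGram a = G} : Finset (Fin D → Fin q → Fin s)).image
      fun a ↦ (blockEncode g D hs hst a : ℕ) + 1, ?_,
    hb.rlSumFree hs hst hdeg hnorm ht hρ fun a ha ↦ (mem_filter.1 ha).2, ?_⟩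
  · rw [image_subset_iff]
    exact fun a _ ↦ mem_Icc.2 ⟨Nat.le_add_left 1 _, (blockEncode g D hs hst a).is_lt⟩
  · rwa [card_image_of_injective]
    exact (add_left_injective 1).comp (Fin.val_injective.comp (blockEncode g D hs hst).injective)

end SumFree

section Density

open Filter

lemma eventually_pow_succ_mul_add_one_pow_lt {x y u : ℝ} (hx : 0 < x) (hxy : x < y) (hu : 0 ≤ u)
    (k : ℕ) : ∀ᶠ D : ℕ in atTop, x ^ (D + 1) * (u * D + 1) ^ k < y ^ D := by
  have h_little := (isLittleO_pow_const_mul_const_pow_const_pow_of_norm_lt k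
    (by rwa [Real.norm_of_nonneg hx.le] : ‖x‖ < y)).def
      (by positivity : 0 < (2 * x * (u + 1) ^ k)⁻¹)
  filter_upwards [h_little, eventually_ge_atTop 1] with D hD hD1
  have hy : 0 < y := hx.trans hxy
  rw [Real.norm_of_nonneg (by positivity), Real.norm_of_nonneg (by positivity),
    le_inv_mul_iff₀ (by positivity)] at hD
  calc x ^ (D + 1) * (u * D + 1) ^ k ≤ x ^ (D + 1) * ((u + 1) * D) ^ k := by
        have : (1 : ℝ) ≤ D := by exact_mod_cast hD1
        gcongr
        rw [add_one_mul]
        gcongr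
    _ = x * (u + 1) ^ k * (D ^ k * x ^ D) := by rw [mul_pow]; ring
    _ < 2 * x * (u + 1) ^ k * (D ^ k * x ^ D) := by
        have : 0 < x * (u + 1) ^ k * (D ^ k * x ^ D) := by positivity
        linarith
    _ ≤ y ^ D := hD

lemma exists_forall_ge_rpow_lt_card {P : Finset ℕ → Prop} {B k : ℕ} {δ u y : ℝ} (hB : 1 < B)
    (hδ : 0 ≤ δ) (hu : 0 ≤ u) (hy : (B : ℝ) ^ δ < y)
    (h : ∀ D : ℕ, ∃ M ⊆ Icc 1 (B ^ D), P M ∧ y ^ D ≤ (u * D + 1) ^ k * #M) :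
    ∃ N : ℕ, ∀ n ≥ N, ∃ M ⊆ Icc 1 n, P M ∧ (n : ℝ) ^ δ < #M := by
  have hB₀ : (0 : ℝ) < B := by positivity
  obtain ⟨D₀, hD₀⟩ := eventually_atTop.1
    (eventually_pow_succ_mul_add_one_pow_lt (Real.rpow_pos_of_pos hB₀ δ) hy hu k)
  refine ⟨B ^ D₀, fun n hn ↦ ?_⟩
  have hn₀ : n ≠ 0 := ((pow_pos (by omega) D₀).trans_le hn).ne'
  obtain ⟨M, hM, hPM, h_card⟩ := h (Nat.log B n)
  refine ⟨M, hM.trans (Icc_subset_Icc_right (Nat.pow_log_le_self B hn₀)), hPM, ?_⟩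
  set D := Nat.log B n
  have h_rpow : (n : ℝ) ^ δ ≤ ((B : ℝ) ^ δ) ^ (D + 1) := by
    rw [← Real.rpow_natCast, ← Real.rpow_mul hB₀.le, mul_comm, Real.rpow_mul hB₀.le,
      Real.rpow_natCast]
    gcongr
    exact_mod_cast (Nat.lt_pow_succ_log_self hB n).le
  have h_lt : (u * D + 1) ^ k * ((B : ℝ) ^ δ) ^ (D + 1) < (u * D + 1) ^ k * #M := by
    rw [mul_comm]
    exact (hD₀ D (Nat.le_log_of_pow_le hB hn)).trans_le h_card
  exact h_rpow.trans_lt (lt_of_mul_lt_mul_left h_lt (by positivity))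

lemma exists_mul_succ_mul_lt_mul_self {δ : ℝ} (hδ₀ : 0 ≤ δ) (hδ : δ < 1) (g : ℕ) :
    ∃ q : ℕ, δ * ((q + 1) * (q + g + 1)) < q * q := by
  obtain ⟨q, hq⟩ := exists_nat_gt ((2 * g + 3) / (1 - δ))
  rw [div_lt_iff₀ (by linarith)] at hq
  have hq₁ : (1 : ℝ) ≤ q := by
    have : 0 < (q : ℝ) := by nlinarith [(Nat.cast_nonneg g : (0 : ℝ) ≤ g)]
    exact_mod_cast this
  refine ⟨q, ?_⟩
  calc δ * ((q + 1) * (q + g + 1)) ≤ δ * (q * q) + (2 * g + 3) * q := by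
        nlinarith [(Nat.cast_nonneg g : (0 : ℝ) ≤ g), mul_nonneg hδ₀ (Nat.cast_nonneg (α := ℝ) g)]
    _ < δ * (q * q) + q * (1 - δ) * q := by gcongr
    _ = q * q := by ring

lemma exists_pow_pow_rpow_lt_pow_pow {δ : ℝ} (hδ₀ : 0 ≤ δ) (hδ : δ < 1) (g : ℕ) {C : ℕ}
    (hC : 1 < C) :
    ∃ q : ℕ, (((C ^ (q + 1)) ^ (q + g + 1) : ℕ) : ℝ) ^ δ < ((C ^ q : ℕ) : ℝ) ^ q := by
  obtain ⟨q, hq⟩ := exists_mul_succ_mul_lt_mul_self hδ₀ hδ g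
  refine ⟨q, ?_⟩
  calc (((C ^ (q + 1)) ^ (q + g + 1) : ℕ) : ℝ) ^ δ = (C : ℝ) ^ (δ * ((q + 1) * (q + g + 1))) := by
        rw [mul_comm, Real.rpow_mul (by positivity)]
        congr 1
        rw [← pow_mul]
        exact_mod_cast (Real.rpow_natCast C ((q + 1) * (q + g + 1))).symm
    _ < (C : ℝ) ^ ((q : ℝ) * q) := Real.rpow_lt_rpow_of_exponent_lt (by exact_mod_cast hC) hq
    _ = ((C ^ q : ℕ) : ℝ) ^ q := by
        rw [Nat.cast_pow, ← pow_mul]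
        exact_mod_cast Real.rpow_natCast C (q * q)

end Density

theorem exists_large_R4_sum_free_general (r : ℕ) {ε : ℝ} (hε : 0 < ε) :
    ∃ R : Finset ℕ, #R = r ∧ ∃ N : ℕ, ∀ n ≥ N, R ⊆ Icc 1 n ∧
      ∃ M ⊆ Icc 1 n, (∀ L, RLSumFree R L M) ∧ (n : ℝ) ^ (1 - ε) < #M := by
  obtain ⟨b, hb, hb_pos⟩ := exists_realizesOrders (Fin r)
  obtain ⟨A, hA⟩ := Finite.exists_le fun p : Fin r × Fin r ↦ l1Norm (b p.2 - b p.1)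
  obtain ⟨g, hg⟩ := Finite.exists_le fun p : Fin r × Fin r ↦ (b p.2 - b p.1).natDegree
  -- Digits below `C ^ q` in base `C ^ (q + 1)`: the spare factor `C` absorbs the coefficients of
  -- the polynomials, and the exponent `q ^ 2 / ((q + 1) * (q + g + 1))` of the
  -- density tends to `1`.
  obtain ⟨C, hC⟩ : ∃ C, C = r * A + A + 2 := ⟨_, rfl⟩
  have hδ : max (1 - ε) 0 < 1 := max_lt (by linarith) one_pos
  obtain ⟨q, hq⟩ := exists_pow_pow_rpow_lt_pow_pow (le_max_right _ _) hδ g (by omega : 1 < C)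
  have hC_le : C ≤ C ^ (q + 1) := Nat.le_self_pow (by omega) C
  have hs : 0 < C ^ q := pow_pos (by omega) q
  have ht : Fintype.card (Fin r) * A * C ^ q < C ^ (q + 1) := by
    rw [Fintype.card_fin, pow_succ']
    exact Nat.mul_lt_mul_of_pos_right (by omega) hs
  obtain ⟨ρ, hρ_inj, hρ_pos, hρ⟩ := hb.exists_nat_eval_eq
    (fun i j ↦ (hA (i, j)).trans_lt (by omega : A < C ^ (q + 1))) fun i ↦ hb_pos i _
  obtain ⟨N, hN⟩ := exists_forall_ge_rpow_lt_card (one_lt_pow₀ (by omega) (by omega))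
    (le_max_right _ _) (by positivity) hq
    (hb.exists_rlSumFree hs (Nat.pow_le_pow_right (by omega) q.le_succ) (fun i j ↦ hg (i, j))
      (fun i j ↦ hA (i, j)) ht hρ q)
  refine ⟨univ.image ρ, by simp [card_image_of_injective _ hρ_inj],
    max N (max 1 (univ.sup ρ)), fun n hn ↦ ⟨?_, ?_⟩⟩
  · rw [image_subset_iff]
    exact fun i hi ↦ mem_Icc.2 ⟨hρ_pos i, (le_sup hi).trans (by omega)⟩
  · obtain ⟨M, hM, hfree, hcard⟩ := hN n (by omega)
    refine ⟨M, hM, hfree, lt_of_le_of_lt ?_ hcard⟩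
    exact Real.rpow_le_rpow_of_exponent_le (by exact_mod_cast (by omega : 1 ≤ n)) (le_max_left _ _)

theorem exists_large_R4_sum_free (r : ℕ) (hr : 4 ≤ r) (ε : ℝ) (hε : 0 < ε) :
    ∃ N : ℕ, ∀ n : ℕ, N ≤ n →
      ∃ R ⊆ Finset.Icc 1 n, R.card = r ∧
        ∃ M ⊆ Finset.Icc 1 n, RLSumFree R 4 M ∧ (n : ℝ) ^ ((1 : ℝ) - ε) < (M.card : ℝ) := by
  obtain ⟨R, hR, N, h⟩ := exists_large_R4_sum_free_general r hε
  refine ⟨N, fun n hn ↦ ⟨R, (h n hn).1, hR, ?_⟩⟩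
  obtain ⟨M, hM, hfree, hcard⟩ := (h n hn).2
  exact ⟨M, hM, hfree 4, hcard⟩
end
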